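/- Let q be a prime power, let 0 < m < n, let Z be a k-dimensional subspace of F_q^n whose projection π_m(Z) has dimension r, and let X be an s-dimensional subspace of F_q^m with X ⊆ π_m(Z). Let t be an integer with s ≤ t and t − s ≤ k − r. Then the number of t-dimensional subspaces T of F_q^n with T ⊆ Z and π_m(T) = X is exactly q^{s(k−r−t+s)} · [k−r choose t−s]_q. -/

import Mathlib

/-!
Fix a basis `x` of `X`, and put `d = k - r = dim (Z ∩ ker π)` and `a = t - s`. The proof counts
pairs `(v, w)` in which `v` lifts `x` to vectors of `Z` and `w` is an independent family of `a`
vectors in `Z ∩ ker π`. Each `x i` has `q ^ d` lifts, so there are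
`q ^ (d * s) * ∏ i < a, (q ^ d - q ^ i)` pairs (`ncard_adaptedFrames`). A pair spans a subspace `T`
of the kind being counted. For such a `T` one has `dim (T ∩ ker π) = a`, and the pairs spanning `T`
are exactly the pairs contained in `T`, so the same formula with `d` replaced by `a` gives their
number (`ncard_adaptedFrames_eq_mul`). The answer is the quotient of the two counts, which
`eq_pow_mul_gaussBinom` rewrites in terms of the Gaussian binomial coefficient.
-/

/-- The Gaussian binomial coefficient `[n choose k]_q`. -/
def gaussBinom (q n k : ℕ) : ℕ :=
  (∏ i ∈ Finset.range k, (q ^ (n - i) - 1)) / ∏ i ∈ Finset.range k, (q ^ (k - i) - 1)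

/-- Projection of `F^n` onto the first `m` coordinates (deleting the last `n - m`). -/
def proj (F : Type*) [Field F] (m n : ℕ) (h : m ≤ n) :
    (Fin n → F) →ₗ[F] (Fin m → F) :=
  LinearMap.funLeft F F (Fin.castLE h)

/-- A `q`-Steiner system `S_q(t,k,n)`: a set of `k`-dimensional subspaces of `F^n`
such that every `t`-dimensional subspace is contained in exactly one of them. -/
def IsSteiner (F : Type*) [Field F] (t k n : ℕ)
    (D : Set (Submodule F (Fin n → F))) : Prop :=
  (∀ B ∈ D, Module.finrank F B = k) ∧
  ∀ T : Submodule F (Fin n → F), Module.finrank F T = t →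
    ∃! B, B ∈ D ∧ T ≤ B

open Module

lemma finrank_map_add_inf_ker {F V W : Type*} [Field F] [AddCommGroup V] [Module F V]
    [FiniteDimensional F V] [AddCommGroup W] [Module F W] (f : V →ₗ[F] W) (U : Submodule F V) :
    finrank F (U.map f) + finrank F (U ⊓ LinearMap.ker f : Submodule F V) = finrank F U := by
  have h := LinearMap.finrank_range_add_finrank_ker (f.domRestrict U)
  rw [LinearMap.range_domRestrict, LinearMap.ker_domRestrict] at h
  rw [← h, ← Submodule.finrank_map_subtype_eq U, Submodule.map_comap_subtype]

/-- The adapted frames of `U`: pairs `(v, w)` in which `v` lifts the family `x` to vectors of `U`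
and `w` is a linearly independent family of `a` vectors in `U ⊓ ker f`. -/
def adaptedFrames {F V W : Type*} [Field F] [AddCommGroup V] [Module F V]
    [AddCommGroup W] [Module F W] (f : V →ₗ[F] W) {s : ℕ} (x : Fin s → W) (a : ℕ)
    (U : Submodule F V) : Set ((Fin s → V) × (Fin a → V)) :=
  {v | ∀ i, v i ∈ U ∧ f (v i) = x i} ×ˢ
    {w | (∀ j, w j ∈ U ⊓ LinearMap.ker f) ∧ LinearIndependent F w}

section
variable {F V W : Type*} [Field F] [AddCommGroup V] [Module F V]
    [Finite V] [AddCommGroup W] [Module F W]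

/-- The span of an adapted frame maps onto `span x`, and contains the `a`-dimensional span of `w`
inside `ker f`; since it has `s + a` generators, its dimension is exactly `s + a`. -/
lemma span_adaptedFrame (f : V →ₗ[F] W) {s : ℕ} {x : Fin s → W} (hx : LinearIndependent F x)
    {a : ℕ} {U : Submodule F V} {p : (Fin s → V) × (Fin a → V)}
    (hp : p ∈ adaptedFrames f x a U) :
    finrank F (Submodule.span F (Set.range (Sum.elim p.1 p.2))) = s + a ∧
    Submodule.span F (Set.range (Sum.elim p.1 p.2)) ≤ U ∧
    (Submodule.span F (Set.range (Sum.elim p.1 p.2))).map f = Submodule.span F (Set.range x) := by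
  obtain ⟨v, w⟩ := p
  obtain ⟨hv, hw, hwi⟩ := hp
  dsimp only at *
  have hmap : (Submodule.span F (Set.range (Sum.elim v w))).map f =
      Submodule.span F (Set.range x) := by
    have hfv : f ∘ v = x := funext fun i => (hv i).2
    have hfw : Submodule.span F (Set.range w) ≤ LinearMap.ker f := by
      rw [Submodule.span_le]
      rintro _ ⟨j, rfl⟩
      exact (hw j).2
    rw [Set.Sum.elim_range, Submodule.span_union, Submodule.map_sup,
      LinearMap.le_ker_iff_map.1 hfw, sup_bot_eq, Submodule.map_span, ← Set.range_comp, hfv]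
  refine ⟨le_antisymm ?_ ?_, ?_, hmap⟩
  · refine (finrank_range_le_card (R := F) (Sum.elim v w)).trans ?_
    simp
  · rw [← finrank_map_add_inf_ker f, hmap, finrank_span_eq_card hx, Fintype.card_fin]
    have hle : Submodule.span F (Set.range w) ≤
        Submodule.span F (Set.range (Sum.elim v w)) ⊓ LinearMap.ker f := by
      rw [Submodule.span_le]
      rintro _ ⟨j, rfl⟩
      exact ⟨Submodule.subset_span ⟨Sum.inr j, rfl⟩, (hw j).2⟩
    have := Submodule.finrank_mono hle
    rw [finrank_span_eq_card hwi, Fintype.card_fin] at this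
    omega
  · rw [Submodule.span_le]
    rintro _ ⟨i | j, rfl⟩
    · exact (hv i).1
    · exact (hw j).1

variable [Fintype F]

lemma card_lifts (f : V →ₗ[F] W) (U : Submodule F V) (y : W) (hy : y ∈ U.map f) :
    Nat.card {u // u ∈ U ∧ f u = y} =
      Fintype.card F ^ finrank F (U ⊓ LinearMap.ker f : Submodule F V) := by
  obtain ⟨u₀, hu₀, rfl⟩ := hy
  rw [← Nat.card_eq_fintype_card, ← Module.natCard_eq_pow_finrank]
  refine Nat.card_congr ((Equiv.subRight u₀).subtypeEquiv fun u => ?_)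
  have h : u - u₀ ∈ U ↔ u ∈ U := Submodule.sub_mem_iff_left U hu₀
  simp [sub_eq_zero, h]

lemma ncard_adaptedFrames (f : V →ₗ[F] W) {s : ℕ} (x : Fin s → W) (a : ℕ)
    (U : Submodule F V) (hx : ∀ i, x i ∈ U.map f) {d : ℕ}
    (hd : finrank F (U ⊓ LinearMap.ker f : Submodule F V) = d) (had : a ≤ d) :
    (adaptedFrames f x a U).ncard =
      Fintype.card F ^ (d * s) *
        ∏ i ∈ Finset.range a, (Fintype.card F ^ d - Fintype.card F ^ i) := by
  rw [adaptedFrames, Set.ncard_prod]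
  congr 1
  · have e : {v : Fin s → V // ∀ i, v i ∈ U ∧ f (v i) = x i} ≃
        ((i : Fin s) → {u // u ∈ U ∧ f u = x i}) :=
      Equiv.subtypePiEquivPi (p := fun i u => u ∈ U ∧ f u = x i)
    rw [← Nat.card_coe_set_eq, Set.coe_ofPred, Nat.card_congr e, Nat.card_pi,
      Finset.prod_congr rfl fun i _ => card_lifts f U (x i) (hx i), hd]
    simp [pow_mul]
  · let K : Submodule F V := U ⊓ LinearMap.ker f
    have e : {w : Fin a → V | (∀ j, w j ∈ K) ∧ LinearIndependent F w} ≃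
        {w : Fin a → K // LinearIndependent F w} :=
      { toFun w := ⟨fun j => ⟨w.1 j, w.2.1 j⟩,
          LinearIndependent.of_comp K.subtype w.2.2⟩
        invFun w := ⟨fun j => (w.1 j : V), fun j => (w.1 j).2,
          w.2.map' K.subtype K.ker_subtype⟩
        left_inv _ := rfl
        right_inv _ := rfl }
    have : Fintype K := Fintype.ofFinite K
    rw [← Nat.card_coe_set_eq, Nat.card_congr e, card_linearIndependent (hd.symm ▸ had),
      Finset.prod_range, hd]

/-- Double counting: every adapted frame of `Z` is an adapted frame of exactly one of the subspaces
being counted, namely its span. -/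
lemma ncard_adaptedFrames_eq_mul (f : V →ₗ[F] W) {s : ℕ} {x : Fin s → W}
    (hx : LinearIndependent F x) (a : ℕ) (Z : Submodule F V) :
    (adaptedFrames f x a Z).ncard =
      {T : Submodule F V | finrank F T = s + a ∧ T ≤ Z ∧
        T.map f = Submodule.span F (Set.range x)}.ncard *
      (Fintype.card F ^ (a * s) *
        ∏ i ∈ Finset.range a, (Fintype.card F ^ a - Fintype.card F ^ i)) := by
  classical
  have : Fintype V := Fintype.ofFinite V
  have : Fintype (Submodule F V) := Fintype.ofFinite _
  rw [Set.ncard_eq_toFinset_card', Set.ncard_eq_toFinset_card']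
  have hspan : Set.MapsTo (fun p => Submodule.span F (Set.range (Sum.elim p.1 p.2)))
      ((adaptedFrames f x a Z).toFinset : Set ((Fin s → V) × (Fin a → V)))
      ({T : Submodule F V | finrank F T = s + a ∧ T ≤ Z ∧
        T.map f = Submodule.span F (Set.range x)}.toFinset : Set (Submodule F V)) := by
    intro p hp
    rw [Set.coe_toFinset] at hp ⊢
    exact span_adaptedFrame f hx hp
  rw [Finset.card_eq_sum_card_fiberwise hspan]
  refine Finset.sum_const_nat fun T hT => ?_
  obtain ⟨hT, hTZ, hTX⟩ := Set.mem_toFinset.1 hT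
  have hker : finrank F (T ⊓ LinearMap.ker f : Submodule F V) = a := by
    have h := finrank_map_add_inf_ker f T
    rw [hTX, finrank_span_eq_card hx, Fintype.card_fin, hT] at h
    omega
  rw [← ncard_adaptedFrames f x a T
    (fun i => hTX ▸ Submodule.subset_span ⟨i, rfl⟩) hker le_rfl, Set.ncard_eq_toFinset_card']
  congr 1
  ext p
  simp only [Finset.mem_filter, Set.mem_toFinset]
  constructor
  · rintro ⟨⟨hv, hw, hwi⟩, rfl⟩
    exact ⟨fun i => ⟨Submodule.subset_span ⟨Sum.inl i, rfl⟩, (hv i).2⟩,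
      fun j => ⟨Submodule.subset_span ⟨Sum.inr j, rfl⟩, (hw j).2⟩, hwi⟩
  · intro hp
    obtain ⟨h1, h2, -⟩ := span_adaptedFrame f hx hp
    obtain ⟨hv, hw, hwi⟩ := hp
    exact ⟨⟨fun i => ⟨hTZ (hv i).1, (hv i).2⟩, fun j => ⟨hTZ (hw j).1, (hw j).2⟩, hwi⟩,
      Submodule.eq_of_le_of_finrank_eq h2 (h1.trans hT.symm)⟩
end

/-- Pulling the power `q ^ i` out of each factor turns the counts of independent families into the
products defining the Gaussian binomial coefficient. -/
lemma prod_pow_sub_pow (q d a : ℕ) (had : a ≤ d) :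
    ∏ i ∈ Finset.range a, (q ^ d - q ^ i) =
      (∏ i ∈ Finset.range a, q ^ i) * ∏ i ∈ Finset.range a, (q ^ (d - i) - 1) := by
  rw [← Finset.prod_mul_distrib]
  refine Finset.prod_congr rfl fun i hi => ?_
  have : i < a := Finset.mem_range.1 hi
  rw [Nat.mul_sub, mul_one, ← pow_add, Nat.add_sub_cancel' (by omega)]

/-- The denominator of the Gaussian binomial coefficient is prime to `q`, so the double counting
identity also shows that the division defining the coefficient is exact. -/
lemma eq_pow_mul_gaussBinom {q s d a N : ℕ} (hq : 1 < q) (had : a ≤ d)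
    (h : q ^ (d * s) * ∏ i ∈ Finset.range a, (q ^ d - q ^ i) =
      N * (q ^ (a * s) * ∏ i ∈ Finset.range a, (q ^ a - q ^ i))) :
    N = q ^ (s * (d - a)) * gaussBinom q d a := by
  rw [prod_pow_sub_pow q d a had, prod_pow_sub_pow q a a le_rfl] at h
  unfold gaussBinom
  set A := ∏ i ∈ Finset.range a, (q ^ (d - i) - 1)
  set D := ∏ i ∈ Finset.range a, (q ^ (a - i) - 1) with hD
  set P := ∏ i ∈ Finset.range a, q ^ i
  have hP : 0 < P := Finset.prod_pos fun i _ => by positivity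
  have hDpos : 0 < D := Finset.prod_pos fun i hi => by
    have := Nat.one_lt_pow (n := a - i) (by have := Finset.mem_range.1 hi; omega) hq
    omega
  have hcop : Nat.Coprime D (q ^ (s * (d - a))) := by
    refine Nat.Coprime.pow_right _ (Nat.Coprime.prod_left fun i hi => ?_)
    have hi' := Finset.mem_range.1 hi
    have h1 : 1 ≤ q ^ (a - i) := Nat.one_le_pow _ _ (by omega)
    have h2 : Nat.Coprime (q ^ (a - i) - 1) (q ^ (a - i)) := by
      rw [Nat.coprime_comm]
      exact (Nat.coprime_self_sub_right h1).2 (Nat.coprime_one_right _)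
    exact (Nat.coprime_pow_right_iff (by omega) _ _).1 h2
  have hmain : N * D = q ^ (s * (d - a)) * A := by
    have hpow : q ^ (d * s) = q ^ (s * (d - a)) * q ^ (a * s) := by
      rw [← pow_add]
      congr 1
      obtain ⟨c, rfl⟩ := Nat.exists_eq_add_of_le had
      rw [Nat.add_sub_cancel_left]; ring
    have hpos : 0 < q ^ (a * s) * P := by positivity
    refine Nat.eq_of_mul_eq_mul_left hpos ?_
    rw [hpow] at h
    linarith
  have hdvd : D ∣ A := hcop.dvd_of_dvd_mul_left ⟨N, by rw [← hmain, mul_comm]⟩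
  refine Nat.eq_of_mul_eq_mul_right hDpos ?_
  rw [hmain, mul_assoc, Nat.div_mul_cancel hdvd]

theorem stmt_14 (F : Type*) [Field F] [Fintype F] (q : ℕ) (hq : Fintype.card F = q)
    (m n k r s t : ℕ) (hm : 0 < m) (hmn : m < n)
    (Z : Submodule F (Fin n → F)) (hZ : Module.finrank F Z = k)
    (hr : Module.finrank F (Z.map (proj F m n hmn.le)) = r)
    (X : Submodule F (Fin m → F)) (hX : Module.finrank F X = s)
    (hXZ : X ≤ Z.map (proj F m n hmn.le))
    (hst : s ≤ t) (hts : t - s ≤ k - r) :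
    {T : Submodule F (Fin n → F) |
        Module.finrank F T = t ∧ T ≤ Z ∧ T.map (proj F m n hmn.le) = X}.ncard =
      q ^ (s * ((k - r) - (t - s))) * gaussBinom q (k - r) (t - s) := by
  subst hq
  obtain ⟨a, rfl⟩ := Nat.exists_eq_add_of_le hst
  rw [Nat.add_sub_cancel_left] at hts ⊢
  let b : Basis (Fin s) F X := finBasisOfFinrankEq F X hX
  have hb : LinearIndependent F fun i => (b i : Fin m → F) :=
    b.linearIndependent.map' X.subtype X.ker_subtype
  have hspan : Submodule.span F (Set.range fun i => (b i : Fin m → F)) = X := by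
    have := congrArg (Submodule.map X.subtype) b.span_eq
    rwa [Submodule.map_span, ← Set.range_comp, Submodule.map_subtype_top] at this
  have hd := finrank_map_add_inf_ker (proj F m n hmn.le) Z
  have hcount := ncard_adaptedFrames_eq_mul (proj F m n hmn.le) hb a Z
  rw [hspan, ncard_adaptedFrames (d := k - r) _ _ a Z (fun i => hXZ (b i).2) (by omega) hts]
    at hcount
  exact eq_pow_mul_gaussBinom Fintype.one_lt_card hts hcount
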